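/- (Theorem 2) Suppose Q(γ,g) has a unique minimum over Γ×𝒢, attained at (γ₀,g₀); i.e., Q(γ,g)=0 with (γ,g)∈Γ×𝒢 implies γ=γ₀ and g=g₀ on [0,A]. Let (γ̂_n, ĝ_n) be random elements of Γ×𝒢 such that with probability 1, for every n, Q_n(γ̂_n, ĝ_n) = inf_{(γ,g)∈Γ×𝒢} Q_n(γ,g). Then with probability 1, γ̂_n → γ₀ and sup_{t∈[0,A]} |ĝ_n(t) − g₀(t)| → 0 as n→∞. -/

import Mathlib

open MeasureTheory ProbabilityTheory Filter Set Topology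

/-- The class 𝒢 of nonincreasing, `[m,M]`-valued, `L`-Lipschitz continuous functions
on `[0,A]`. -/
def inG (A m M L : ℝ) (g : ℝ → ℝ) : Prop :=
  ContinuousOn g (Set.Icc 0 A) ∧ AntitoneOn g (Set.Icc 0 A) ∧
  (∀ t ∈ Set.Icc (0 : ℝ) A, g t ∈ Set.Icc m M) ∧
  LipschitzOnWith (Real.toNNReal L) g (Set.Icc 0 A)

/-- The limiting criterion `Q(γ, g)`. -/
noncomputable def Qlim (Δ γ₀ : ℝ) (x z g₀ : ℝ → ℝ) (γ : ℝ) (g : ℝ → ℝ) : ℝ :=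
  (1 / Δ) * ∫ w in (0 : ℝ)..Δ,
    (Real.log (1 + γ₀ * x w) - Real.log (1 + γ * x w) +
      Real.log (g₀ (z w)) - Real.log (g (z w))) ^ 2

/-- The empirical average squared error loss `Q_n(γ, g)(ω)`, where the observations are
`yᵢ = log(1+γ₀xᵢ) + log g₀(zᵢ) + εᵢ` with `xᵢ = x(iΔ/n)`, `zᵢ = z(iΔ/n)`. -/
noncomputable def Qemp {Ω : Type*} (Δ γ₀ : ℝ) (x z g₀ : ℝ → ℝ) (ε : ℤ → Ω → ℝ)
    (n : ℕ) (γ : ℝ) (g : ℝ → ℝ) (ω : Ω) : ℝ :=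
  (1 / (n : ℝ)) * ∑ i ∈ Finset.Icc 1 n,
    ((Real.log (1 + γ₀ * x ((i : ℝ) * Δ / n)) + Real.log (g₀ (z ((i : ℝ) * Δ / n))) +
        ε (i : ℤ) ω)
      - Real.log (1 + γ * x ((i : ℝ) * Δ / n)) - Real.log (g (z ((i : ℝ) * Δ / n)))) ^ 2

/-!
Subtracting the criterion at the truth turns the least squares inequality into
`n⁻¹ ∑ᵢ (f(wᵢ) - f₀(wᵢ))² ≤ 2 n⁻¹ ∑ᵢ εᵢ (f(wᵢ) - f₀(wᵢ))`, where `f` is the fitted and `f₀` the true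
log-mean and `wᵢ = iΔ/n`. By Arzelà–Ascoli `Γ × 𝒢` is compact, so it suffices to identify every
cluster point of the estimators. Along an ultrafilter converging to such a point `f` converges
uniformly, and the left-hand side tends to the Riemann integral of the limiting squared difference.
The right-hand side tends to `0`: almost surely the Cesàro means of `ε` vanish (the strong law for
the innovations passes through the AR(1) recursion), and summation by parts on the grid extends this
to means weighted by a Lipschitz, hence by any continuous, function of `wᵢ`. So the limiting
criterion is zero at the cluster point, which is therefore the truth.
-/

section ARNoise

theorem integrable_of_integrable_pow {Ω 𝕜 : Type*} [MeasurableSpace Ω] [NormedDivisionRing 𝕜]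
    {μ : Measure Ω} [IsFiniteMeasure μ] {f : Ω → 𝕜} (hf : AEStronglyMeasurable f μ) {n : ℕ}
    (hn : n ≠ 0) (hint : Integrable (fun ω => f ω ^ n) μ) : Integrable f μ := by
  refine (integrable_norm_iff hf).1 ?_
  simpa only [pow_one] using integrable_norm_pow_of_le hf (Nat.one_le_iff_ne_zero.2 hn)
    (by simpa only [norm_pow] using hint.norm)

/-- A noise sequence that is negligible for least squares: its Cesàro means tend to zero, and those
of its absolute values are bounded. Only this pathwise property of the noise enters the consistency
argument. -/
structure IsCesaroNegligible (e : ℕ → ℝ) : Prop where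
  tendsto_average : Tendsto (fun n : ℕ => (∑ i ∈ Finset.range n, e i) / n) atTop (𝓝 0)
  bddAbove_average_abs : BddAbove (range fun n : ℕ => (∑ i ∈ Finset.range n, |e i|) / n)

theorem ae_isCesaroNegligible_of_pairwise_indepFun {Ω : Type*} [MeasurableSpace Ω] {μ : Measure Ω}
    {X : ℕ → Ω → ℝ} (hint : Integrable (X 0) μ) (hindep : Pairwise fun i j => X i ⟂ᵢ[μ] X j)
    (hident : ∀ i, IdentDistrib (X i) (X 0) μ μ) (hmean : μ[X 0] = 0) :
    ∀ᵐ ω ∂μ, IsCesaroNegligible fun i => X i ω := by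
  have habs : ∀ᵐ ω ∂μ,
      Tendsto (fun n : ℕ => (∑ i ∈ Finset.range n, |X i ω|) / n) atTop (𝓝 μ[fun ω => |X 0 ω|]) :=
    strong_law_ae_real (fun i ω => |X i ω|) hint.abs
      (fun _ _ hij => (hindep hij).comp measurable_norm measurable_norm)
      (fun i => (hident i).comp measurable_norm)
  filter_upwards [strong_law_ae_real X hint hindep hident, habs] with ω hω hω_abs
  exact ⟨hmean ▸ hω, hω_abs.bddAbove_range⟩

theorem tendsto_zero_of_succ_le_mul_add {b v : ℕ → ℝ} {r : ℝ} (hr₀ : 0 ≤ r) (hr₁ : r < 1)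
    (hb : ∀ n, 0 ≤ b n) (hv : Tendsto v atTop (𝓝 0)) (h : ∀ n, b (n + 1) ≤ r * b n + v n) :
    Tendsto b atTop (𝓝 0) := by
  refine (nhds_basis_Ioo_pos (0 : ℝ)).tendsto_right_iff.2 fun δ hδ => ?_
  obtain ⟨N, hN⟩ := eventually_atTop.1
    (hv.eventually_lt_const (mul_pos (sub_pos.2 hr₁) (half_pos hδ)))
  have hgeom : ∀ k, b (k + N) ≤ r ^ k * b N + δ / 2 := by
    intro k
    induction k with
    | zero => simpa using (half_pos hδ).le
    | succ k ih =>
      calc b (k + 1 + N) = b (k + N + 1) := by rw [Nat.add_right_comm]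
        _ ≤ r * b (k + N) + v (k + N) := h _
        _ ≤ r * (r ^ k * b N + δ / 2) + (1 - r) * (δ / 2) := by
          gcongr
          exact (hN _ (Nat.le_add_left N k)).le
        _ = r ^ (k + 1) * b N + δ / 2 := by ring
  have hpow : Tendsto (fun k => r ^ k * b N + δ / 2) atTop (𝓝 (δ / 2)) := by
    simpa using ((tendsto_pow_atTop_nhds_zero_of_lt_one hr₀ hr₁).mul_const (b N)).add_const (δ / 2)
  rw [← map_add_atTop_eq_nat N, eventually_map]
  filter_upwards [hpow.eventually_lt_const (half_lt_self hδ)] with k hk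
  exact ⟨by linarith [hb (k + N)], by linarith [hgeom k]⟩

variable {φ : ℝ} {a u : ℕ → ℝ}

/- The partial sums `T n` of `a (i + 1)` inherit the recursion of `a`, with the partial sums of `u`
as forcing term, so `|T n / n|` is contracted by the factor `|φ|` up to a vanishing error. -/
theorem tendsto_average_of_ar (hφ : |φ| < 1) (ha : ∀ i, a (i + 1) = φ * a i + u i)
    (hu : Tendsto (fun n : ℕ => (∑ i ∈ Finset.range n, u i) / n) atTop (𝓝 0)) :
    Tendsto (fun n : ℕ => (∑ i ∈ Finset.range n, a (i + 1)) / n) atTop (𝓝 0) := by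
  set T : ℕ → ℝ := fun n => ∑ i ∈ Finset.range n, a (i + 1)
  set V : ℕ → ℝ := fun n => ∑ i ∈ Finset.range n, u i
  have hT : ∀ n, T (n + 1) = φ * (a 0 + T n) + V (n + 1) := fun n => by
    have hshift : a 0 + T n = ∑ i ∈ Finset.range (n + 1), a i := by
      rw [Finset.sum_range_succ', add_comm]
    rw [hshift, Finset.mul_sum, ← Finset.sum_add_distrib]
    exact Finset.sum_congr rfl fun i _ => ha i
  have hT_le : ∀ n : ℕ, |T n / (n + 1 : ℕ)| ≤ |T n / n| := fun n => by
    rcases n.eq_zero_or_pos with rfl | hn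
    · simp [T]
    · rw [abs_div, abs_div, Nat.abs_cast, Nat.abs_cast]
      gcongr
      exact n.le_succ
  have hforcing : Tendsto (fun n : ℕ => |φ * a 0 / (n + 1 : ℕ) + V (n + 1) / (n + 1 : ℕ)|)
      atTop (𝓝 0) := by
    simpa using (((tendsto_const_div_atTop_nhds_zero_nat (φ * a 0)).add hu).comp
      (tendsto_add_atTop_nat 1)).abs
  refine (tendsto_zero_iff_abs_tendsto_zero _).2
    (tendsto_zero_of_succ_le_mul_add (abs_nonneg φ) hφ (fun n => abs_nonneg _) hforcing fun n => ?_)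
  calc |T (n + 1) / (n + 1 : ℕ)|
      = |φ * (T n / (n + 1 : ℕ)) + (φ * a 0 / (n + 1 : ℕ) + V (n + 1) / (n + 1 : ℕ))| := by
        rw [hT]; ring_nf
    _ ≤ |φ| * |T n / (n + 1 : ℕ)| + |φ * a 0 / (n + 1 : ℕ) + V (n + 1) / (n + 1 : ℕ)| :=
        (abs_add_le _ _).trans_eq (by rw [abs_mul])
    _ ≤ |φ| * |T n / n| + |φ * a 0 / (n + 1 : ℕ) + V (n + 1) / (n + 1 : ℕ)| := by
        grw [hT_le n]

theorem sum_abs_le_of_ar (hφ : |φ| < 1) (ha : ∀ i, a (i + 1) = φ * a i + u i) (n : ℕ) :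
    ∑ i ∈ Finset.range n, |a (i + 1)| ≤
      (|φ| * |a 0| + ∑ i ∈ Finset.range n, |u i|) / (1 - |φ|) := by
  have hshift : ∑ i ∈ Finset.range n, |a i| ≤ |a 0| + ∑ i ∈ Finset.range n, |a (i + 1)| := by
    rw [add_comm, ← Finset.sum_range_succ' fun i => |a i|, Finset.sum_range_succ]
    exact le_add_of_nonneg_right (abs_nonneg _)
  have hsum : ∑ i ∈ Finset.range n, |a (i + 1)| ≤
      |φ| * ∑ i ∈ Finset.range n, |a i| + ∑ i ∈ Finset.range n, |u i| := by
    rw [Finset.mul_sum, ← Finset.sum_add_distrib]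
    gcongr with i
    rw [ha, ← abs_mul]
    exact abs_add_le _ _
  rw [le_div_iff₀ (sub_pos.2 hφ)]
  linarith [mul_le_mul_of_nonneg_left hshift (abs_nonneg φ)]

theorem IsCesaroNegligible.of_ar (hu : IsCesaroNegligible u) (hφ : |φ| < 1)
    (ha : ∀ i, a (i + 1) = φ * a i + u i) : IsCesaroNegligible fun i => a (i + 1) := by
  refine ⟨tendsto_average_of_ar hφ ha hu.tendsto_average, ?_⟩
  obtain ⟨C, hC⟩ := hu.bddAbove_average_abs
  refine ⟨(|φ| * |a 0| + C) / (1 - |φ|), forall_mem_range.2 fun n => ?_⟩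
  have _ : 0 < 1 - |φ| := sub_pos.2 hφ
  have hinit : |φ| * |a 0| / n ≤ |φ| * |a 0| := by
    rcases n with - | n
    · simpa using by positivity
    · exact div_le_self (by positivity) (by simp)
  calc (∑ i ∈ Finset.range n, |a (i + 1)|) / n
      ≤ (|φ| * |a 0| + ∑ i ∈ Finset.range n, |u i|) / (1 - |φ|) / n := by
        gcongr
        exact sum_abs_le_of_ar hφ ha n
    _ = (|φ| * |a 0| / n + (∑ i ∈ Finset.range n, |u i|) / n) / (1 - |φ|) := by
        rw [div_right_comm, add_div]
    _ ≤ (|φ| * |a 0| + C) / (1 - |φ|) := by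
        gcongr
        exact hC (mem_range_self n)

theorem ar_succ_of_hasSum {R : Type*} [Ring R] [TopologicalSpace R] [IsTopologicalRing R]
    [T2Space R] {φ : R} {a u : ℤ → R}
    (h : ∀ i, HasSum (fun j : ℕ => φ ^ j * u (i - j)) (a i)) (i : ℤ) :
    a (i + 1) = φ * a i + u (i + 1) := by
  have htail : HasSum (fun j : ℕ => φ ^ (j + 1) * u (i + 1 - (j + 1 : ℕ)))
      (a (i + 1) - u (i + 1)) := by
    simpa using (hasSum_nat_add_iff' 1).2 (h (i + 1))
  have hscaled : HasSum (fun j : ℕ => φ ^ (j + 1) * u (i + 1 - (j + 1 : ℕ))) (φ * a i) := by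
    simpa [pow_succ', mul_assoc] using (h i).mul_left φ
  exact sub_eq_iff_eq_add.1 (htail.unique hscaled)

theorem ae_isCesaroNegligible_of_hasSum_ar {Ω : Type*} [MeasurableSpace Ω] {μ : Measure Ω}
    {φ : ℝ} (hφ : |φ| < 1) {U ε : ℤ → Ω → ℝ} (hint : Integrable (U 0) μ)
    (hindep : Pairwise fun i j => U i ⟂ᵢ[μ] U j) (hident : ∀ j, IdentDistrib (U j) (U 0) μ μ)
    (hmean : μ[U 0] = 0)
    (hε : ∀ᵐ ω ∂μ, ∀ i : ℤ, HasSum (fun j : ℕ => φ ^ j * U (i - j) ω) (ε i ω)) :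
    ∀ᵐ ω ∂μ, IsCesaroNegligible fun i : ℕ => ε (i + 1) ω := by
  have hU : ∀ᵐ ω ∂μ, IsCesaroNegligible fun i : ℕ => U (i + 1) ω :=
    ae_isCesaroNegligible_of_pairwise_indepFun (X := fun i : ℕ => U (i + 1))
      ((hident _).integrable_iff.2 hint)
      (fun i j hij => hindep (by simpa using hij))
      (fun i => (hident _).trans (hident _).symm)
      ((hident _).integral_eq.trans hmean)
  filter_upwards [hU, hε] with ω hUω hεω
  have hrec (i : ℕ) : ε (i + 1 : ℕ) ω = φ * ε i ω + U (i + 1) ω :=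
    ar_succ_of_hasSum (a := fun i => ε i ω) (u := fun i => U i ω) hεω i
  simpa only [Nat.cast_succ] using hUω.of_ar (a := fun i : ℕ => ε i ω) hφ hrec

end ARNoise

section GridAverage

/-- The average `n⁻¹ ∑ᵢ eᵢ f(iΔ/n)`, `1 ≤ i ≤ n`, of `f` over the sampling grid of `[0, Δ]` with
weights `e`. The weights are indexed from `0`, so `e i` sits at the grid point `(i + 1)Δ/n`. -/
noncomputable def gridAverage (Δ : ℝ) (e : ℕ → ℝ) (f : ℝ → ℝ) (n : ℕ) : ℝ :=
  (∑ i ∈ Finset.range n, e i * f (((i : ℝ) + 1) * Δ / n)) / n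

variable {Δ : ℝ} {e : ℕ → ℝ} {f g : ℝ → ℝ}

theorem succ_mul_div_mem_Icc (hΔ : 0 ≤ Δ) {i n : ℕ} (hi : i < n) :
    ((i : ℝ) + 1) * Δ / n ∈ Icc 0 Δ := by
  refine ⟨by positivity, ?_⟩
  rw [mul_div_right_comm]
  exact mul_le_of_le_one_left hΔ (div_le_one_of_le₀ (by exact_mod_cast hi) n.cast_nonneg)

theorem abs_gridAverage_sub_le (hΔ : 0 ≤ Δ) {r : ℝ} (hfg : ∀ w ∈ Icc 0 Δ, |f w - g w| ≤ r)
    (n : ℕ) :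
    |gridAverage Δ e f n - gridAverage Δ e g n| ≤ (∑ i ∈ Finset.range n, |e i|) / n * r := by
  rw [gridAverage, gridAverage, ← sub_div, ← Finset.sum_sub_distrib, abs_div, Nat.abs_cast,
    div_mul_eq_mul_div, Finset.sum_mul]
  gcongr
  refine (Finset.abs_sum_le_sum_abs _ _).trans (Finset.sum_le_sum fun i hi => ?_)
  rw [← mul_sub, abs_mul]
  gcongr
  exact hfg _ (succ_mul_div_mem_Icc hΔ (Finset.mem_range.1 hi))

theorem tendsto_gridAverage_of_tendstoUniformlyOn (hΔ : 0 ≤ Δ)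
    (he : BddAbove (range fun n : ℕ => (∑ i ∈ Finset.range n, |e i|) / n)) {l : Filter ℕ}
    {F : ℕ → ℝ → ℝ} {c : ℝ} (hF : TendstoUniformlyOn F f l (Icc 0 Δ))
    (hf : Tendsto (gridAverage Δ e f) l (𝓝 c)) :
    Tendsto (fun n => gridAverage Δ e (F n) n) l (𝓝 c) := by
  obtain ⟨C, hC⟩ := he
  have hC₀ : 0 ≤ C := by simpa using hC (mem_range_self 0)
  refine hf.congr_dist (Metric.tendsto_nhds.2 fun δ hδ => ?_)
  filter_upwards [Metric.tendstoUniformlyOn_iff.1 hF (δ / (C + 1)) (by positivity)] with n hn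
  rw [Real.dist_0_eq_abs, abs_dist]
  calc |gridAverage Δ e f n - gridAverage Δ e (F n) n|
      ≤ (∑ i ∈ Finset.range n, |e i|) / n * (δ / (C + 1)) :=
        abs_gridAverage_sub_le hΔ (fun w hw => (hn w hw).le) n
    _ ≤ C * (δ / (C + 1)) := by
        gcongr
        exact hC (mem_range_self n)
    _ < δ := by
        rw [mul_div_left_comm]
        exact mul_lt_of_lt_one_right hδ ((div_lt_one (by positivity)).2 (lt_add_one C))

theorem abs_sum_sub_integral_le {n : ℕ} {r : ℝ} (hf : ContinuousOn f (Icc 0 n))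
    (hr : ∀ i < n, ∀ t ∈ Icc (i : ℝ) (i + 1), |f (i + 1) - f t| ≤ r) :
    |∑ i ∈ Finset.range n, f (i + 1) - ∫ t in (0 : ℝ)..n, f t| ≤ n * r := by
  have hint : ∀ i < n, IntervalIntegrable f volume (i : ℝ) (i + 1 : ℕ) := fun i hi => by
    refine (hf.mono ?_).intervalIntegrable_of_Icc (by simp)
    exact Icc_subset_Icc i.cast_nonneg (by exact_mod_cast hi)
  have hsplit := intervalIntegral.sum_integral_adjacent_intervals (a := fun i : ℕ => (i : ℝ)) hint
  have hcell : ∀ i ∈ Finset.range n, |f (i + 1) - ∫ t in (i : ℝ)..(i + 1 : ℕ), f t| ≤ r := by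
    intro i hi
    have hi := Finset.mem_range.1 hi
    have hdiff : f (i + 1) - ∫ t in (i : ℝ)..(i + 1 : ℕ), f t =
        ∫ t in (i : ℝ)..(i + 1 : ℕ), (f (i + 1) - f t) := by
      rw [intervalIntegral.integral_sub intervalIntegrable_const (hint i hi)]
      simp
    have hbound := intervalIntegral.norm_integral_le_of_norm_le_const (C := r)
      (f := fun t => f (i + 1) - f t) (a := (i : ℝ)) (b := (i + 1 : ℕ)) fun t ht => by
        rw [uIoc_of_le (by simp), Nat.cast_succ] at ht
        exact hr i hi t (Ioc_subset_Icc_self ht)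
    rw [hdiff]
    simpa using hbound
  rw [Nat.cast_zero] at hsplit
  calc |∑ i ∈ Finset.range n, f (i + 1) - ∫ t in (0 : ℝ)..n, f t|
      ≤ ∑ i ∈ Finset.range n, |f (i + 1) - ∫ t in (i : ℝ)..(i + 1 : ℕ), f t| := by
        rw [← hsplit, ← Finset.sum_sub_distrib]
        exact Finset.abs_sum_le_sum_abs _ _
    _ ≤ n * r := by simpa using Finset.sum_le_sum hcell

theorem tendsto_gridAverage_one (hΔ : 0 < Δ) (hf : ContinuousOn f (Icc 0 Δ)) :
    Tendsto (gridAverage Δ 1 f) atTop (𝓝 (1 / Δ * ∫ w in (0 : ℝ)..Δ, f w)) := by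
  refine Metric.tendsto_nhds.2 fun r hr => ?_
  obtain ⟨δ, hδ, hfδ⟩ := Metric.uniformContinuousOn_iff.1
    (isCompact_Icc.uniformContinuousOn_of_continuous hf) (r / 2) (half_pos hr)
  filter_upwards [(tendsto_const_div_atTop_nhds_zero_nat Δ).eventually_lt_const hδ,
    eventually_gt_atTop 0] with n hnδ hn
  have hn₀ : (0 : ℝ) < n := Nat.cast_pos.2 hn
  have hmaps : MapsTo (fun t : ℝ => t * (Δ / n)) (Icc 0 n) (Icc 0 Δ) := fun t ht =>
    ⟨mul_nonneg ht.1 (by positivity), by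
      simpa [mul_div_cancel₀ Δ hn₀.ne'] using
        mul_le_mul_of_nonneg_right ht.2 (by positivity : 0 ≤ Δ / n)⟩
  have hosc : ∀ i < n, ∀ t ∈ Icc (i : ℝ) (i + 1),
      |f ((i + 1) * (Δ / n)) - f (t * (Δ / n))| ≤ r / 2 := by
    intro i hi t ht
    have hin : (i : ℝ) + 1 ≤ n := by exact_mod_cast hi
    refine (hfδ _ (hmaps ⟨by positivity, hin⟩) _
      (hmaps ⟨i.cast_nonneg.trans ht.1, ht.2.trans hin⟩) ?_).le
    rw [Real.dist_eq, ← sub_mul, abs_mul, abs_of_nonneg (sub_nonneg.2 ht.2),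
      abs_of_pos (by positivity)]
    exact (mul_le_of_le_one_left (by positivity) (by linarith [ht.1])).trans_lt hnδ
  have hsub : 1 / Δ * ∫ w in (0 : ℝ)..Δ, f w = (∫ t in (0 : ℝ)..n, f (t * (Δ / n))) / n := by
    rw [intervalIntegral.integral_comp_mul_right _ (by positivity), zero_mul,
      mul_div_cancel₀ Δ hn₀.ne', smul_eq_mul]
    field_simp
  have hbound := abs_sum_sub_integral_le
    (f := fun t => f (t * (Δ / n))) (hf.comp (by fun_prop) hmaps) hosc
  simp only [gridAverage, Pi.one_apply, one_mul, mul_div_assoc]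
  rw [hsub, Real.dist_eq, ← sub_div, abs_div, Nat.abs_cast, div_lt_iff₀ hn₀]
  nlinarith

theorem abs_sum_range_succ_mul_le (e F : ℕ → ℝ) (n : ℕ) :
    |∑ i ∈ Finset.range (n + 1), e i * F i| ≤ |F n| * |∑ i ∈ Finset.range (n + 1), e i| +
      ∑ i ∈ Finset.range n, |F (i + 1) - F i| * |∑ j ∈ Finset.range (i + 1), e j| := by
  have hparts : ∑ i ∈ Finset.range (n + 1), e i * F i = F n * ∑ i ∈ Finset.range (n + 1), e i -
      ∑ i ∈ Finset.range n, (F (i + 1) - F i) * ∑ j ∈ Finset.range (i + 1), e j := by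
    simpa [mul_comm] using Finset.sum_range_by_parts F e (n + 1)
  simp only [hparts, ← abs_mul]
  exact (abs_sub _ _).trans (add_le_add_right (Finset.abs_sum_le_sum_abs _ _) _)

theorem abs_sub_le_of_lipschitzOnWith_grid (hΔ : 0 ≤ Δ) {K : NNReal}
    (hf : LipschitzOnWith K f (Icc 0 Δ)) {i n : ℕ} (hi : i + 1 < n) :
    |f (((i + 1 : ℕ) + 1) * Δ / n) - f ((i + 1) * Δ / n)| ≤ K * (Δ / n) := by
  have hmesh : ((i + 1 : ℕ) + 1) * Δ / n - (i + 1) * Δ / n = Δ / n := by push_cast; ring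
  have hdist := hf.dist_le_mul _ (succ_mul_div_mem_Icc hΔ hi) _
    (succ_mul_div_mem_Icc hΔ (i.lt_succ_self.trans hi))
  rwa [Real.dist_eq, Real.dist_eq, hmesh, abs_of_nonneg (a := Δ / n) (by positivity)] at hdist

theorem abs_gridAverage_le_of_lipschitzOnWith (hΔ : 0 ≤ Δ) {K : NNReal}
    (hf : LipschitzOnWith K f (Icc 0 Δ)) (n : ℕ) :
    |gridAverage Δ e f n| ≤ |f Δ| * |(∑ i ∈ Finset.range n, e i) / n| +
      K * Δ * ((n : ℝ)⁻¹ * ∑ i ∈ Finset.range n,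
        |(∑ j ∈ Finset.range (i + 1), e j) / (i + 1 : ℕ)|) := by
  rcases n with - | n
  · simp [gridAverage]
  set S : ℕ → ℝ := fun k => ∑ i ∈ Finset.range k, e i
  set F : ℕ → ℝ := fun i => f (((i : ℝ) + 1) * Δ / (n + 1 : ℕ)) with hF
  have hlast : F n = f Δ := by
    simp only [hF]
    congr 1
    push_cast
    field_simp
  have hstep : ∀ i ∈ Finset.range n,
      |F (i + 1) - F i| * |S (i + 1)| ≤ K * Δ * |S (i + 1) / (i + 1 : ℕ)| := by
    intro i hi
    have hin : i < n := Finset.mem_range.1 hi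
    calc |F (i + 1) - F i| * |S (i + 1)|
        ≤ K * (Δ / (n + 1 : ℕ)) * |S (i + 1)| := by
          gcongr
          exact abs_sub_le_of_lipschitzOnWith_grid hΔ hf (Nat.succ_lt_succ hin)
      _ ≤ K * (Δ / (i + 1 : ℕ)) * |S (i + 1)| := by gcongr
      _ = K * Δ * |S (i + 1) / (i + 1 : ℕ)| := by
          rw [abs_div, Nat.abs_cast]
          ring
  calc |gridAverage Δ e f (n + 1)|
      ≤ (|f Δ| * |S (n + 1)| + ∑ i ∈ Finset.range n, |F (i + 1) - F i| * |S (i + 1)|) /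
          (n + 1 : ℕ) := by
        rw [gridAverage, abs_div, Nat.abs_cast, ← hlast]
        gcongr
        exact abs_sum_range_succ_mul_le e F n
    _ ≤ (|f Δ| * |S (n + 1)| + ∑ i ∈ Finset.range (n + 1), K * Δ * |S (i + 1) / (i + 1 : ℕ)|) /
          (n + 1 : ℕ) := by
        gcongr
        rw [Finset.sum_range_succ]
        exact (Finset.sum_le_sum hstep).trans (le_add_of_nonneg_right (by positivity))
    _ = _ := by
        rw [abs_div, Nat.abs_cast, ← Finset.mul_sum]
        ring

theorem tendsto_gridAverage_of_lipschitzOnWith (hΔ : 0 ≤ Δ)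
    (he : Tendsto (fun n : ℕ => (∑ i ∈ Finset.range n, e i) / n) atTop (𝓝 0)) {K : NNReal}
    (hf : LipschitzOnWith K f (Icc 0 Δ)) : Tendsto (gridAverage Δ e f) atTop (𝓝 0) := by
  have hcesaro := ((he.comp (tendsto_add_atTop_nat 1)).abs).cesaro
  refine squeeze_zero_norm (abs_gridAverage_le_of_lipschitzOnWith hΔ hf) ?_
  simpa using (he.abs.const_mul |f Δ|).add (hcesaro.const_mul (K * Δ))

/- Lipschitz functions are handled by summation by parts; polynomials are Lipschitz on `[0, Δ]` and
uniformly dense. -/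
theorem IsCesaroNegligible.tendsto_gridAverage (he : IsCesaroNegligible e) (hΔ : 0 ≤ Δ)
    (hf : ContinuousOn f (Icc 0 Δ)) : Tendsto (gridAverage Δ e f) atTop (𝓝 0) := by
  obtain ⟨C, hC⟩ := he.bddAbove_average_abs
  have hC₀ : 0 ≤ C := by simpa using hC (mem_range_self 0)
  refine Metric.tendsto_nhds.2 fun r hr => ?_
  obtain ⟨p, hp⟩ :=
    exists_polynomial_near_of_continuousOn 0 Δ f hf (r / 2 / (C + 1)) (by positivity)
  obtain ⟨K, hK⟩ := (p.contDiff_aeval (n := 1) (𝕜 := ℝ)).contDiffOn.exists_lipschitzOnWith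
    one_ne_zero (convex_Icc 0 Δ) isCompact_Icc
  have hpoly := tendsto_gridAverage_of_lipschitzOnWith hΔ he.tendsto_average hK
  filter_upwards [Metric.tendsto_nhds.1 hpoly (r / 2) (half_pos hr)] with n hn
  have happrox :
      |gridAverage Δ e (fun t => p.aeval t) n - gridAverage Δ e f n| ≤ r / 2 := by
    calc |gridAverage Δ e (fun t => p.aeval t) n - gridAverage Δ e f n|
        ≤ (∑ i ∈ Finset.range n, |e i|) / n * (r / 2 / (C + 1)) :=
          abs_gridAverage_sub_le hΔ (fun w hw => (hp w hw).le) n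
      _ ≤ (C + 1) * (r / 2 / (C + 1)) := by
          gcongr
          exact (hC (mem_range_self n)).trans (le_add_of_nonneg_right zero_le_one)
      _ = r / 2 := mul_div_cancel₀ _ (by positivity)
  calc dist (gridAverage Δ e f n) 0
      ≤ dist (gridAverage Δ e f n) (gridAverage Δ e (fun t => p.aeval t) n) +
        dist (gridAverage Δ e (fun t => p.aeval t) n) 0 := dist_triangle _ _ _
    _ < r / 2 + r / 2 := add_lt_add_of_le_of_lt (by rwa [dist_comm]) hn
    _ = r := add_halves r

end GridAverage

section LeastSquares

/-- The mean squared residual of a regression function `f` for the data `f₀(iΔ/n) + eᵢ`,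
`1 ≤ i ≤ n`. As in `gridAverage`, the noise is indexed from `0`. -/
noncomputable def meanSqResidual (Δ : ℝ) (e : ℕ → ℝ) (f₀ f : ℝ → ℝ) (n : ℕ) : ℝ :=
  (∑ i ∈ Finset.range n,
    (f₀ (((i : ℝ) + 1) * Δ / n) + e i - f (((i : ℝ) + 1) * Δ / n)) ^ 2) / n

variable {Δ : ℝ} {e : ℕ → ℝ} {f₀ f g : ℝ → ℝ}

theorem meanSqResidual_congr (hΔ : 0 ≤ Δ) (hfg : EqOn f g (Icc 0 Δ)) (n : ℕ) :
    meanSqResidual Δ e f₀ f n = meanSqResidual Δ e f₀ g n := by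
  refine congrArg (· / (n : ℝ)) (Finset.sum_congr rfl fun i hi => ?_)
  rw [hfg (succ_mul_div_mem_Icc hΔ (Finset.mem_range.1 hi))]

theorem meanSqResidual_sub_self (n : ℕ) :
    meanSqResidual Δ e f₀ f n - meanSqResidual Δ e f₀ f₀ n =
      gridAverage Δ 1 (fun w => (f w - f₀ w) ^ 2) n -
        2 * gridAverage Δ e (fun w => f w - f₀ w) n := by
  simp only [meanSqResidual, gridAverage, ← sub_div, ← mul_div_assoc, Finset.mul_sum,
    ← Finset.sum_sub_distrib, Pi.one_apply]
  congr! 2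
  ring

theorem tendstoUniformlyOn_of_continuousOn_uncurry {ι X Y E : Type*} [TopologicalSpace X]
    [TopologicalSpace Y] [UniformSpace E] {F : X → Y → E} {s : Set X} {t : Set Y}
    (ht : IsCompact t) (hF : ContinuousOn (Function.uncurry F) (s ×ˢ t)) {x : X} (hx : x ∈ s)
    {l : Filter ι} {u : ι → X} (hu : Tendsto u l (𝓝[s] x)) :
    TendstoUniformlyOn (fun i => F (u i)) (F x) l t := by
  intro V hV
  obtain ⟨v, hv, hvV⟩ := ht.mem_uniformity_of_prod hF hx (symm_le_uniformity hV)
  filter_upwards [hu hv] with i hi y hy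
  exact hvV _ hi y hy

theorem tendsto_of_leastSquares {Θ : Type*} [TopologicalSpace Θ] (hΔ : 0 < Δ)
    (he : IsCesaroNegligible e) {K : Set Θ} (hK : IsCompact K) {h : Θ → ℝ → ℝ}
    (hh : ContinuousOn (Function.uncurry h) (K ×ˢ Icc 0 Δ)) (hf₀ : ContinuousOn f₀ (Icc 0 Δ))
    {θ₀ : Θ} (huniq : ∀ θ ∈ K, ∫ w in (0 : ℝ)..Δ, (h θ w - f₀ w) ^ 2 = 0 → θ = θ₀)
    {θhat : ℕ → Θ} (hmem : ∀ n, θhat n ∈ K)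
    (hmin : ∀ n, meanSqResidual Δ e f₀ (h (θhat n)) n ≤ meanSqResidual Δ e f₀ f₀ n) :
    Tendsto θhat atTop (𝓝 θ₀) := by
  have herr : ContinuousOn (Function.uncurry fun θ w => h θ w - f₀ w) (K ×ˢ Icc 0 Δ) :=
    hh.sub (hf₀.comp continuousOn_snd mapsTo_snd_prod)
  have herr_sq : ContinuousOn (Function.uncurry fun θ w => (h θ w - f₀ w) ^ 2) (K ×ˢ Icc 0 Δ) :=
    herr.fun_pow 2
  have herr_apply : ∀ θ ∈ K, ContinuousOn (fun w => h θ w - f₀ w) (Icc 0 Δ) := fun θ hθ =>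
    herr.comp (by fun_prop : ContinuousOn (fun w : ℝ => (θ, w)) (Icc 0 Δ)) fun w hw => ⟨hθ, hw⟩
  have hone : BddAbove (range fun n : ℕ => (∑ i ∈ Finset.range n, |(1 : ℕ → ℝ) i|) / n) :=
    ⟨1, forall_mem_range.2 fun n => by simpa using div_self_le_one (n : ℝ)⟩
  refine hK.tendsto_nhds_of_unique_mapClusterPt (.of_forall hmem) fun θ hθ hcluster => ?_
  obtain ⟨𝒰, h𝒰, hlim⟩ := mapClusterPt_iff_ultrafilter.1 hcluster
  have hlimK : Tendsto θhat 𝒰 (𝓝[K] θ) := tendsto_nhdsWithin_iff.2 ⟨hlim, .of_forall hmem⟩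
  have hcross : Tendsto (fun n => gridAverage Δ e (fun w => h (θhat n) w - f₀ w) n) 𝒰 (𝓝 0) :=
    tendsto_gridAverage_of_tendstoUniformlyOn hΔ.le he.bddAbove_average_abs
      (tendstoUniformlyOn_of_continuousOn_uncurry isCompact_Icc herr hθ hlimK)
      ((he.tendsto_gridAverage hΔ.le (herr_apply θ hθ)).mono_left h𝒰)
  have hsq : Tendsto (fun n => gridAverage Δ 1 (fun w => (h (θhat n) w - f₀ w) ^ 2) n) 𝒰
      (𝓝 (1 / Δ * ∫ w in (0 : ℝ)..Δ, (h θ w - f₀ w) ^ 2)) :=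
    tendsto_gridAverage_of_tendstoUniformlyOn hΔ.le hone
      (tendstoUniformlyOn_of_continuousOn_uncurry isCompact_Icc herr_sq hθ hlimK)
      ((tendsto_gridAverage_one hΔ ((herr_apply θ hθ).pow 2)).mono_left h𝒰)
  have hle : 1 / Δ * ∫ w in (0 : ℝ)..Δ, (h θ w - f₀ w) ^ 2 ≤ 2 * 0 :=
    le_of_tendsto_of_tendsto' hsq (hcross.const_mul 2) fun n => by
      linarith [hmin n, meanSqResidual_sub_self (Δ := Δ) (e := e) (f₀ := f₀) (f := h (θhat n)) n]
  rw [mul_zero] at hle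
  exact huniq θ hθ ((nonpos_of_mul_nonpos_right hle (by positivity)).antisymm
    (intervalIntegral.integral_nonneg hΔ.le fun w _ => sq_nonneg _))

end LeastSquares

section ShapeClass

theorem isCompact_setOf_lipschitzWith_forall_mem {X Y : Type*} [PseudoMetricSpace X]
    [CompactSpace X] [MetricSpace Y] {s : Set Y} (hs : IsCompact s) (K : NNReal) :
    IsCompact {f : BoundedContinuousFunction X Y | LipschitzWith K f ∧ ∀ t, f t ∈ s} := by
  have hrange : IsClosed {f : X → Y | ∀ t, f t ∈ s} := by
    simpa [Set.pi] using isClosed_set_pi (i := univ) fun (_ : X) _ => hs.isClosed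
  refine BoundedContinuousFunction.arzela_ascoli₂ s hs _
    (((isClosed_setOfPred_lipschitzWith K).inter hrange).preimage
      BoundedContinuousFunction.continuous_coe) (fun f t hf => hf.2 t) ?_
  exact (LipschitzWith.uniformEquicontinuous _ K fun f => f.2.1).equicontinuous

/-- The class `𝒢` of `inG` as a set of bounded continuous functions on the compact interval
`[0, A]`, so that it carries the topology of uniform convergence. -/
def shapeClass (A m M L : ℝ) : Set (BoundedContinuousFunction (Icc (0 : ℝ) A) ℝ) :=
  {f | (LipschitzWith L.toNNReal f ∧ ∀ t, f t ∈ Icc m M) ∧ Antitone f}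

variable {A m M L : ℝ} {g : ℝ → ℝ}

theorem isCompact_shapeClass (A m M L : ℝ) : IsCompact (shapeClass A m M L) :=
  (isCompact_setOf_lipschitzWith_forall_mem isCompact_Icc L.toNNReal).inter_right
    (isClosed_antitone.preimage BoundedContinuousFunction.continuous_coe)

/-- A function of `𝒢` as a bounded continuous function on `[0, A]`. -/
noncomputable def inG.restrict (hg : inG A m M L g) :
    BoundedContinuousFunction (Icc (0 : ℝ) A) ℝ :=
  BoundedContinuousFunction.mkOfCompact ⟨_, hg.1.domRestrict⟩

@[simp]
theorem inG.restrict_apply (hg : inG A m M L g) (t : Icc (0 : ℝ) A) : hg.restrict t = g t := rfl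

theorem inG.restrict_mem (hg : inG A m M L g) : hg.restrict ∈ shapeClass A m M L :=
  ⟨⟨hg.2.2.2.to_restrict, fun t => hg.2.2.1 t t.2⟩, fun s t hst => hg.2.1 s.2 t.2 hst⟩

theorem inG_IccExtend (hA : 0 ≤ A) {f : BoundedContinuousFunction (Icc (0 : ℝ) A) ℝ}
    (hf : f ∈ shapeClass A m M L) : inG A m M L (IccExtend hA f) := by
  refine ⟨by fun_prop, fun s _ t _ hst => hf.2 (monotone_projIcc hA hst),
    fun t _ => hf.1.2 _, ?_⟩
  have hlip := hf.1.1.comp (LipschitzWith.projIcc hA)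
  rw [mul_one] at hlip
  exact hlip.lipschitzOnWith

end ShapeClass

section Regression

/-- The mean of the observation at a point `w` of `[0, Δ]` under the parameters `(γ, g)`. -/
noncomputable def logMean (x z : ℝ → ℝ) (γ : ℝ) (g : ℝ → ℝ) (w : ℝ) : ℝ :=
  Real.log (1 + γ * x w) + Real.log (g (z w))

variable {Δ A xm xM m M L : ℝ} {x z : ℝ → ℝ}

theorem Qlim_eq (Δ γ₀ : ℝ) (x z g₀ : ℝ → ℝ) (γ : ℝ) (g : ℝ → ℝ) :
    Qlim Δ γ₀ x z g₀ γ g =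
      1 / Δ * ∫ w in (0 : ℝ)..Δ, (logMean x z γ g w - logMean x z γ₀ g₀ w) ^ 2 := by
  simp only [Qlim, logMean]
  congr! 3
  ring

theorem Qemp_eq_meanSqResidual {Ω : Type*} (Δ γ₀ : ℝ) (x z g₀ : ℝ → ℝ) (ε : ℤ → Ω → ℝ) (n : ℕ)
    (γ : ℝ) (g : ℝ → ℝ) (ω : Ω) :
    Qemp Δ γ₀ x z g₀ ε n γ g ω =
      meanSqResidual Δ (fun i => ε (i + 1) ω) (logMean x z γ₀ g₀) (logMean x z γ g) n := by
  rw [Qemp, meanSqResidual, one_div_mul_eq_div, ← Finset.Ico_add_one_right_eq_Icc,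
    Finset.sum_Ico_eq_sum_range]
  refine congrArg (· / (n : ℝ)) (Finset.sum_congr (by simp) fun i _ => ?_)
  simp only [logMean, add_comm 1 i, Nat.cast_add, Nat.cast_one]
  ring

theorem one_add_mul_pos {xm xM γ x : ℝ} (hxm : 0 < xm) (hxM : 0 < xM)
    (hγ : γ ∈ Icc (-(1 / xM)) (1 / xm)) (hx : x ∈ Ioo (-xm) xM) : 0 < 1 + γ * x := by
  rcases lt_trichotomy γ 0 with hneg | rfl | hpos
  · have : -1 ≤ γ * xM := by
      rw [← div_le_iff₀ hxM, neg_div]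
      exact hγ.1
    linarith [mul_lt_mul_of_neg_left hx.2 hneg]
  · simp
  · have : γ * xm ≤ 1 := (le_div_iff₀ hxm).1 hγ.2
    linarith [mul_lt_mul_of_pos_left hx.1 hpos]

theorem continuousOn_uncurry_logMean (hA : 0 ≤ A) (hxm : 0 < xm) (hxM : 0 < xM) (hm : 0 < m)
    (hxcont : ContinuousOn x (Icc 0 Δ)) (hxrange : ∀ w ∈ Icc (0 : ℝ) Δ, x w ∈ Ioo (-xm) xM)
    (hzcont : ContinuousOn z (Icc 0 Δ)) :
    ContinuousOn (Function.uncurry fun (θ : ℝ × BoundedContinuousFunction (Icc (0 : ℝ) A) ℝ) w =>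
      logMean x z θ.1 (IccExtend hA θ.2) w)
      ((Icc (-(1 / xM)) (1 / xm) ×ˢ shapeClass A m M L) ×ˢ Icc 0 Δ) := by
  have hx : ContinuousOn
      (fun p : (ℝ × BoundedContinuousFunction (Icc (0 : ℝ) A) ℝ) × ℝ => 1 + p.1.1 * x p.2)
      ((Icc (-(1 / xM)) (1 / xm) ×ˢ shapeClass A m M L) ×ˢ Icc 0 Δ) :=
    continuousOn_const.add ((continuous_fst.comp continuous_fst).continuousOn.mul
      (hxcont.comp continuousOn_snd mapsTo_snd_prod))
  have hz : ContinuousOn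
      (fun p : (ℝ × BoundedContinuousFunction (Icc (0 : ℝ) A) ℝ) × ℝ =>
        IccExtend hA p.1.2 (z p.2))
      ((Icc (-(1 / xM)) (1 / xm) ×ˢ shapeClass A m M L) ×ˢ Icc 0 Δ) :=
    (continuous_snd.comp continuous_fst).continuousOn.eval
      (continuous_projIcc.comp_continuousOn (hzcont.comp continuousOn_snd mapsTo_snd_prod))
  refine (hx.log ?_).add (hz.log ?_)
  · rintro ⟨⟨γ, f⟩, w⟩ ⟨⟨hγ, -⟩, hw⟩
    exact (one_add_mul_pos hxm hxM hγ (hxrange w hw)).ne'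
  · rintro ⟨⟨γ, f⟩, w⟩ ⟨⟨-, hf⟩, -⟩
    exact (hm.trans_le (hf.1.2 _).1).ne'

theorem tendsto_minimizer_of_isCesaroNegligible {Ω : Type*} (hΔ : 0 < Δ) (hxm : 0 < xm)
    (hxM : 0 < xM) (hxcont : ContinuousOn x (Icc 0 Δ))
    (hxrange : ∀ w ∈ Icc (0 : ℝ) Δ, x w ∈ Ioo (-xm) xM)
    (hzcont : ContinuousOn z (Icc 0 Δ)) (hzrange : ∀ w ∈ Icc (0 : ℝ) Δ, z w ∈ Icc 0 A)
    (ε : ℤ → Ω → ℝ) (ω : Ω) (hε : IsCesaroNegligible fun i : ℕ => ε (i + 1) ω)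
    {γ₀ : ℝ} (hγ₀ : γ₀ ∈ Icc (-(1 / xM)) (1 / xm)) (hm : 0 < m) {g₀ : ℝ → ℝ}
    (hg₀ : inG A m M L g₀)
    (huniq : ∀ γ ∈ Icc (-(1 / xM)) (1 / xm), ∀ g : ℝ → ℝ, inG A m M L g →
      Qlim Δ γ₀ x z g₀ γ g = 0 → γ = γ₀ ∧ ∀ t ∈ Icc (0 : ℝ) A, g t = g₀ t)
    {γhat : ℕ → ℝ} {ghat : ℕ → ℝ → ℝ} (hγhat : ∀ n, γhat n ∈ Icc (-(1 / xM)) (1 / xm))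
    (hghat : ∀ n, inG A m M L (ghat n))
    (hmin : ∀ n, Qemp Δ γ₀ x z g₀ ε n (γhat n) (ghat n) ω ≤ Qemp Δ γ₀ x z g₀ ε n γ₀ g₀ ω) :
    Tendsto γhat atTop (𝓝 γ₀) ∧ TendstoUniformlyOn ghat g₀ atTop (Icc 0 A) := by
  have hA : 0 ≤ A := nonempty_Icc.1 ⟨z 0, hzrange 0 (left_mem_Icc.2 hΔ.le)⟩
  have hEqOn {γ : ℝ} {g : ℝ → ℝ} (hg : inG A m M L g) :
      EqOn (logMean x z γ (IccExtend hA hg.restrict)) (logMean x z γ g) (Icc 0 Δ) := fun w hw => by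
    simp [logMean, IccExtend_of_mem _ _ (hzrange w hw)]
  have hcont := continuousOn_uncurry_logMean (M := M) (L := L) hA hxm hxM hm hxcont hxrange hzcont
  have hcont₀ : ContinuousOn (logMean x z γ₀ g₀) (Icc 0 Δ) :=
    ContinuousOn.congr (hcont.comp
      (by fun_prop : ContinuousOn (fun w : ℝ => ((γ₀, hg₀.restrict), w)) (Icc 0 Δ))
      fun w hw => ⟨⟨hγ₀, hg₀.restrict_mem⟩, hw⟩) (hEqOn hg₀).symm
  have hlim : Tendsto (fun n => (γhat n, (hghat n).restrict)) atTop (𝓝 (γ₀, hg₀.restrict)) := by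
    refine tendsto_of_leastSquares hΔ hε (isCompact_Icc.prod (isCompact_shapeClass A m M L))
      hcont hcont₀ ?_ (fun n => ⟨hγhat n, (hghat n).restrict_mem⟩) fun n => ?_
    · rintro ⟨γ, f⟩ ⟨hγ, hf⟩ hzero
      obtain ⟨rfl, hfg⟩ := huniq γ hγ _ (inG_IccExtend hA hf) (by rw [Qlim_eq, hzero, mul_zero])
      refine Prod.ext rfl (BoundedContinuousFunction.ext fun t => ?_)
      simpa using hfg t t.2
    · rw [meanSqResidual_congr hΔ.le (hEqOn (hghat n))]
      simpa only [Qemp_eq_meanSqResidual] using hmin n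
  refine ⟨hlim.fst_nhds, tendstoUniformlyOn_iff_tendstoUniformly_comp_coe.2 ?_⟩
  exact BoundedContinuousFunction.tendsto_iff_tendstoUniformly.1 hlim.snd_nhds

end Regression

theorem stmt5_general {Ω : Type*} [MeasurableSpace Ω] (μ : Measure Ω)
    (Δ A xm xM : ℝ) (hΔ : 0 < Δ) (hxm : 0 < xm) (hxM : 0 < xM) (x z : ℝ → ℝ)
    (hxcont : ContinuousOn x (Icc 0 Δ)) (hxrange : ∀ w ∈ Icc (0 : ℝ) Δ, x w ∈ Ioo (-xm) xM)
    (hzcont : ContinuousOn z (Icc 0 Δ)) (hzrange : ∀ w ∈ Icc (0 : ℝ) Δ, z w ∈ Icc 0 A)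
    (U : ℤ → Ω → ℝ) (hUint : Integrable (U 0) μ) (hUindep : Pairwise fun i j => U i ⟂ᵢ[μ] U j)
    (hUident : ∀ j, IdentDistrib (U j) (U 0) μ μ) (hUmean : μ[U 0] = 0)
    (φ : ℝ) (hφ : |φ| < 1) (ε : ℤ → Ω → ℝ)
    (hεsum : ∀ᵐ ω ∂μ, ∀ i : ℤ, HasSum (fun j : ℕ => φ ^ j * U (i - j) ω) (ε i ω))
    (γ₀ : ℝ) (hγ₀ : γ₀ ∈ Icc (-(1 / xM)) (1 / xm)) (m M L : ℝ) (hm : 0 < m)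
    (g₀ : ℝ → ℝ) (hg₀ : inG A m M L g₀)
    (huniq : ∀ γ ∈ Icc (-(1 / xM)) (1 / xm), ∀ g : ℝ → ℝ, inG A m M L g →
      Qlim Δ γ₀ x z g₀ γ g = 0 → γ = γ₀ ∧ ∀ t ∈ Icc (0 : ℝ) A, g t = g₀ t)
    (γhat : ℕ → Ω → ℝ) (ghat : ℕ → Ω → ℝ → ℝ)
    (hest : ∀ᵐ ω ∂μ, ∀ n : ℕ, γhat n ω ∈ Icc (-(1 / xM)) (1 / xm) ∧ inG A m M L (ghat n ω) ∧
      Qemp Δ γ₀ x z g₀ ε n (γhat n ω) (ghat n ω) ω ≤ Qemp Δ γ₀ x z g₀ ε n γ₀ g₀ ω) :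
    ∀ᵐ ω ∂μ, Tendsto (fun n : ℕ => γhat n ω) atTop (𝓝 γ₀) ∧
      ∀ e > (0 : ℝ), ∃ N : ℕ, ∀ n ≥ N, ∀ t ∈ Icc (0 : ℝ) A, |ghat n ω t - g₀ t| < e := by
  filter_upwards [ae_isCesaroNegligible_of_hasSum_ar hφ hUint hUindep hUident hUmean hεsum, hest]
    with ω hnoise hω
  obtain ⟨hγ, hg⟩ := tendsto_minimizer_of_isCesaroNegligible hΔ hxm hxM hxcont hxrange hzcont
    hzrange ε ω hnoise hγ₀ hm hg₀ huniq (fun n => (hω n).1) (fun n => (hω n).2.1)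
    (fun n => (hω n).2.2)
  refine ⟨hγ, fun e he => eventually_atTop.1 ?_⟩
  simpa only [dist_comm (g₀ _), Real.dist_eq] using Metric.tendstoUniformlyOn_iff.1 hg e he

/-- Theorem 2: if `Q` has a unique minimum at `(γ₀, g₀)` and
`(γ̂ₙ, ĝₙ)` minimize `Qₙ` over `Γ × 𝒢`, then almost surely `γ̂ₙ → γ₀` and
`sup_{t ∈ [0,A]} |ĝₙ(t) - g₀(t)| → 0`. -/
theorem stmt5
    {Ω : Type*} [MeasurableSpace Ω] (μ : Measure Ω) [IsProbabilityMeasure μ]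
    (Δ A xm xM : ℝ) (hΔ : 0 < Δ) (hA : 0 < A) (hxm : 0 < xm) (hxM : 0 < xM)
    (x z : ℝ → ℝ)
    (hxcont : ContinuousOn x (Icc 0 Δ))
    (hxrange : ∀ w ∈ Icc (0 : ℝ) Δ, x w ∈ Ioo (-xm) xM)
    (hzcont : ContinuousOn z (Icc 0 Δ))
    (hzrange : ∀ w ∈ Icc (0 : ℝ) Δ, z w ∈ Icc 0 A)
    (hzmono : StrictMonoOn z (Icc 0 Δ))
    (U : ℤ → Ω → ℝ) (hUmeas : ∀ j, Measurable (U j))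
    (hUindep : iIndepFun U μ)
    (hUident : ∀ j, μ.map (U j) = μ.map (U 0))
    (σ : ℝ) (hσ : 0 < σ)
    (hUmean : ∫ ω, U 0 ω ∂μ = 0)
    (hUvar : ∫ ω, (U 0 ω) ^ 2 ∂μ = σ ^ 2)
    (hU8 : Integrable (fun ω => (U 0 ω) ^ 8) μ)
    (φ : ℝ) (hφ0 : φ ≠ 0) (hφ1 : |φ| < 1)
    (ε : ℤ → Ω → ℝ) (hεmeas : ∀ i, Measurable (ε i))
    (hεsum : ∀ᵐ ω ∂μ, ∀ i : ℤ, HasSum (fun j : ℕ => φ ^ j * U (i - (j : ℤ)) ω) (ε i ω))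
    (γ₀ : ℝ) (hγ₀ : γ₀ ∈ Ioo (-(1 / xM)) (1 / xm))
    (m M L : ℝ) (hm : 0 < m) (hmM : m < M) (hL : 0 < L)
    (g₀ : ℝ → ℝ) (hg₀ : inG A m M L g₀)
    (huniq : ∀ γ ∈ Icc (-(1 / xM)) (1 / xm), ∀ g : ℝ → ℝ, inG A m M L g →
      Qlim Δ γ₀ x z g₀ γ g = 0 → γ = γ₀ ∧ ∀ t ∈ Icc (0 : ℝ) A, g t = g₀ t)
    (γhat : ℕ → Ω → ℝ) (ghat : ℕ → Ω → ℝ → ℝ)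
    (hest : ∀ᵐ ω ∂μ, ∀ n : ℕ,
      γhat n ω ∈ Icc (-(1 / xM)) (1 / xm) ∧ inG A m M L (ghat n ω) ∧
      ∀ γ ∈ Icc (-(1 / xM)) (1 / xm), ∀ g : ℝ → ℝ, inG A m M L g →
        Qemp Δ γ₀ x z g₀ ε n (γhat n ω) (ghat n ω) ω ≤ Qemp Δ γ₀ x z g₀ ε n γ g ω) :
    ∀ᵐ ω ∂μ, Tendsto (fun n : ℕ => γhat n ω) atTop (𝓝 γ₀) ∧
      ∀ e > (0 : ℝ), ∃ N : ℕ, ∀ n ≥ N, ∀ t ∈ Icc (0 : ℝ) A, |ghat n ω t - g₀ t| < e := by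
  have hUint : Integrable (U 0) μ :=
    integrable_of_integrable_pow (hUmeas 0).aestronglyMeasurable (by norm_num) hU8
  exact stmt5_general μ Δ A xm xM hΔ hxm hxM x z hxcont hxrange hzcont hzrange U hUint
    (fun _ _ hij => hUindep.indepFun hij)
    (fun j => ⟨(hUmeas j).aemeasurable, (hUmeas 0).aemeasurable, hUident j⟩) hUmean φ hφ1 ε hεsum
    γ₀ (Ioo_subset_Icc_self hγ₀) m M L hm g₀ hg₀ huniq γhat ghat (hest.mono fun ω hω n =>
      ⟨(hω n).1, (hω n).2.1, (hω n).2.2 γ₀ (Ioo_subset_Icc_self hγ₀) g₀ hg₀⟩)
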